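/- Let K ⊆ ℝ^m and λ ∈ ℝ^n be such that ∇f(Aλ) ∈ K and Aᵀ∇f(Aλ) ≠ 0. Then ‖∇F(λ)‖_{L^{-1}} ≥ γ̃(A,K) · D¹_{K ∩ Ker(Aᵀ)}(∇f(Aλ)) / f(Aλ). Consequently, if moreover the ESO holds with constant β > 0 and δ_i = −(1/(β L_i))·∇_i F(λ), then E[F(λ + δ_{[Ŝ]})] ≤ F(λ) − (τ/(2βn)) · γ̃(A,K)² · D¹_{K ∩ Ker(Aᵀ)}(∇f(Aλ))² / f(Aλ)². -/

import Mathlib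

open Finset
open scoped BigOperators Classical

noncomputable section

/-- Exponential loss `f(x) = (1/m) Σ_j exp(x_j)` (the normaliser `m` is fixed,
the index type may vary). -/
def fExp (m : ℕ) {ι : Type} [Fintype ι] (x : ι → ℝ) : ℝ :=
  (1 / (m : ℝ)) * ∑ j, Real.exp (x j)

/-- Gradient of the exponential loss. -/
def gradf (m : ℕ) {ι : Type} [Fintype ι] (x : ι → ℝ) : ι → ℝ :=
  fun j => fderiv ℝ (fExp m (ι := ι)) x (Pi.single j 1)

/-- `F(λ) = log f(Aλ)`. -/
def FObj {mr : Type} [Fintype mr] {n : ℕ} (m : ℕ) (A : Matrix mr (Fin n) ℝ)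
    (lam : Fin n → ℝ) : ℝ :=
  Real.log (fExp m (A.mulVec lam))

/-- Gradient of `F`: `(∇F(λ))_i` is the `i`-th partial derivative. -/
def gradF {mr : Type} [Fintype mr] {n : ℕ} (m : ℕ) (A : Matrix mr (Fin n) ℝ)
    (lam : Fin n → ℝ) : Fin n → ℝ :=
  fun i => fderiv ℝ (FObj m A) lam (Pi.single i 1)

/-- Coordinate-wise Lipschitz constants `L_i = max_j A_{j,i}²`. -/
def Lip {mr : Type} [Fintype mr] {n : ℕ} (A : Matrix mr (Fin n) ℝ) (i : Fin n) : ℝ :=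
  ⨆ j, (A j i) ^ 2

/-- `h_{[S]}`: keep the coordinates of `h` in `S`, zero the others. -/
def restr {n : ℕ} (h : Fin n → ℝ) (S : Finset (Fin n)) : Fin n → ℝ :=
  fun i => if i ∈ S then h i else 0

/-- Expectation over the `τ`-nice sampling (uniform over subsets of cardinality `τ`). -/
def niceExp (n τ : ℕ) (g : Finset (Fin n) → ℝ) : ℝ :=
  (∑ S ∈ Finset.powersetCard τ (Finset.univ : Finset (Fin n)), g S) /
    ((Finset.powersetCard τ (Finset.univ : Finset (Fin n))).card : ℝ)

/-- Expected Separable Overapproximation with constant `β` and weights `L`. -/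
def ESO {mr : Type} [Fintype mr] {n : ℕ} (m : ℕ) (A : Matrix mr (Fin n) ℝ)
    (τ : ℕ) (β : ℝ) : Prop :=
  ∀ x h : Fin n → ℝ,
    niceExp n τ (fun S => FObj m A (x + restr h S)) ≤
      FObj m A x + ((τ : ℝ) / (n : ℝ)) *
        ((∑ i, gradF m A x i * h i) + (β / 2) * ∑ i, Lip A i * h i ^ 2)

/-- ℓ¹ distance from `x` to a set `K`. -/
def D1 {ι : Type} [Fintype ι] (K : Set (ι → ℝ)) (x : ι → ℝ) : ℝ :=
  ⨅ z : K, ∑ j, |x j - (z : ι → ℝ) j|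

/-- Kernel of `Aᵀ`. -/
def kerAT {mr : Type} [Fintype mr] {n : ℕ} (A : Matrix mr (Fin n) ℝ) : Set (mr → ℝ) :=
  {φ | A.transpose.mulVec φ = 0}

/-- `‖g‖_{L⁻¹} = (Σ_i g_i²/L_i)^{1/2}`. -/
def normLinv {mr : Type} [Fintype mr] {n : ℕ} (A : Matrix mr (Fin n) ℝ)
    (g : Fin n → ℝ) : ℝ :=
  Real.sqrt (∑ i, g i ^ 2 / Lip A i)

/-- `γ̃(A,K)`. -/
def gammaT {mr : Type} [Fintype mr] {n : ℕ} (A : Matrix mr (Fin n) ℝ)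
    (K : Set (mr → ℝ)) : ℝ :=
  ⨅ φ : {φ : mr → ℝ // φ ∈ K ∧ φ ∉ kerAT A},
    normLinv A (A.transpose.mulVec (φ : mr → ℝ)) / D1 (K ∩ kerAT A) (φ : mr → ℝ)

/-- Hard core `H(A)`. -/
def hardCore {mr : Type} [Fintype mr] {n : ℕ} (A : Matrix mr (Fin n) ℝ) : Set mr :=
  {j | ∃ φ : mr → ℝ, φ ∈ kerAT A ∧ (∀ k, 0 ≤ φ k) ∧ 0 < φ j}

/-- Parallel Adaboost iterates, given the sequence of sampled coordinate sets. -/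
def iter {mr : Type} [Fintype mr] {n : ℕ} (m : ℕ) (A : Matrix mr (Fin n) ℝ) (β : ℝ)
    (lam0 : Fin n → ℝ) (s : ℕ → Finset (Fin n)) : ℕ → Fin n → ℝ
  | 0 => lam0
  | t + 1 =>
    let lt := iter m A β lam0 s t
    let lt' : Fin n → ℝ := fun i =>
      if i ∈ s t then lt i - (1 / (β * Lip A i)) * gradF m A lt i else lt i
    if FObj m A lt' ≤ FObj m A lt then lt' else lt

lemma fExp_diff (m : ℕ) {ι : Type} [Fintype ι] : Differentiable ℝ (fExp m (ι := ι)) := by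
  unfold fExp
  fun_prop

lemma fExp_pos' {m : ℕ} (hm : 1 ≤ m) (x : Fin m → ℝ) : 0 < fExp m x := by
  unfold fExp
  have hm' : (0 : ℝ) < m := by exact_mod_cast hm
  have : Nonempty (Fin m) := ⟨⟨0, hm⟩⟩
  have : 0 < ∑ j, Real.exp (x j) :=
    Finset.sum_pos (fun j _ => Real.exp_pos _) Finset.univ_nonempty
  positivity

lemma gradF_eq {m n : ℕ} (hm : 1 ≤ m) (A : Matrix (Fin m) (Fin n) ℝ) (lam : Fin n → ℝ)
    (i : Fin n) :
    gradF m A lam i = A.transpose.mulVec (gradf m (A.mulVec lam)) i / fExp m (A.mulVec lam) := by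
  have hpos := fExp_pos' hm (A.mulVec lam)
  let B : (Fin n → ℝ) →L[ℝ] (Fin m → ℝ) := LinearMap.toContinuousLinearMap A.mulVecLin
  have hB : ∀ x, B x = A.mulVec x := fun x => rfl
  have h1 : HasFDerivAt (fExp m (ι := Fin m)) (fderiv ℝ (fExp m (ι := Fin m)) (B lam)) (B lam) :=
    (fExp_diff m (B lam)).hasFDerivAt
  have h2 := (h1.comp lam B.hasFDerivAt).log (by simpa [hB] using hpos.ne')
  have h3 : fderiv ℝ (FObj m A) lam = _ := h2.fderiv
  unfold gradF
  rw [h3]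
  have h4 : B (Pi.single i 1) = ∑ j, A j i • (Pi.single j 1 : Fin m → ℝ) := by
    rw [hB]
    ext k
    simp [Finset.sum_apply, Pi.single_apply]
  simp only [smul_apply, ContinuousLinearMap.comp_apply, h4, map_sum, map_smul,
    Function.comp, hB, smul_eq_mul, Matrix.mulVec, dotProduct, Matrix.transpose_apply, gradf]
  rw [inv_mul_eq_div]
  congr!

lemma Lip_pos {m n : ℕ} (A : Matrix (Fin m) (Fin n) ℝ)
    (hA : ∀ i : Fin n, ∃ j : Fin m, A j i ≠ 0) (i : Fin n) : 0 < Lip A i := by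
  obtain ⟨j, hj⟩ := hA i
  have h : A j i ^ 2 ≤ Lip A i :=
    le_ciSup (f := fun j => A j i ^ 2) (Set.finite_range _).bddAbove j
  have : 0 < A j i ^ 2 := by positivity
  linarith

lemma D1_nonneg {ι : Type} [Fintype ι] (K : Set (ι → ℝ)) (x : ι → ℝ) : 0 ≤ D1 K x :=
  Real.iInf_nonneg fun _ => Finset.sum_nonneg fun _ _ => abs_nonneg _

lemma ratio_nonneg {m n : ℕ} (A : Matrix (Fin m) (Fin n) ℝ) (K : Set (Fin m → ℝ))
    (φ : Fin m → ℝ) :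
    0 ≤ normLinv A (A.transpose.mulVec φ) / D1 (K ∩ kerAT A) φ :=
  div_nonneg (Real.sqrt_nonneg _) (D1_nonneg _ _)

lemma gammaT_nonneg {m n : ℕ} (A : Matrix (Fin m) (Fin n) ℝ) (K : Set (Fin m → ℝ)) :
    0 ≤ gammaT A K :=
  Real.iInf_nonneg fun φ => ratio_nonneg A K φ

lemma gammaT_mul_le {m n : ℕ} (A : Matrix (Fin m) (Fin n) ℝ) (K : Set (Fin m → ℝ))
    (φ : Fin m → ℝ) (hK : φ ∈ K) (hk : A.transpose.mulVec φ ≠ 0) :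
    gammaT A K * D1 (K ∩ kerAT A) φ ≤ normLinv A (A.transpose.mulVec φ) := by
  rcases (D1_nonneg (K ∩ kerAT A) φ).eq_or_lt with h | h
  · rw [← h, mul_zero]
    exact Real.sqrt_nonneg _
  · rw [← le_div_iff₀ h]
    exact ciInf_le (f := fun φ : {φ : Fin m → ℝ // φ ∈ K ∧ φ ∉ kerAT A} =>
      normLinv A (A.transpose.mulVec (φ : Fin m → ℝ)) / D1 (K ∩ kerAT A) (φ : Fin m → ℝ))
      ⟨0, by rintro _ ⟨ψ, rfl⟩; exact ratio_nonneg A K ψ⟩ ⟨φ, hK, hk⟩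

/-- if `∇f(Aλ) ∈ K` and `Aᵀ∇f(Aλ) ≠ 0` then
`‖∇F(λ)‖_{L⁻¹} ≥ γ̃(A,K)·D¹_{K∩Ker Aᵀ}(∇f(Aλ))/f(Aλ)`; consequently under the
ESO the expected decrease is at least `(τ/(2βn))·γ̃²·D¹²/f(Aλ)²`. -/
theorem stmt4 {m n : ℕ} (hm : 1 ≤ m) (hn : 1 ≤ n) (A : Matrix (Fin m) (Fin n) ℝ)
    (hA : ∀ i : Fin n, ∃ j : Fin m, A j i ≠ 0)
    (τ : ℕ) (hτ1 : 1 ≤ τ) (hτn : τ ≤ n)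
    (K : Set (Fin m → ℝ)) (lam : Fin n → ℝ)
    (hK : gradf m (A.mulVec lam) ∈ K)
    (hker : A.transpose.mulVec (gradf m (A.mulVec lam)) ≠ 0) :
    normLinv A (gradF m A lam) ≥
      gammaT A K * D1 (K ∩ kerAT A) (gradf m (A.mulVec lam)) / fExp m (A.mulVec lam) ∧
    ∀ β : ℝ, 0 < β → ESO m A τ β →
      ∀ δ : Fin n → ℝ, (∀ i, δ i = -(1 / (β * Lip A i)) * gradF m A lam i) →
        niceExp n τ (fun S => FObj m A (lam + restr δ S)) ≤
          FObj m A lam - (τ : ℝ) / (2 * β * (n : ℝ)) * gammaT A K ^ 2 *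
            D1 (K ∩ kerAT A) (gradf m (A.mulVec lam)) ^ 2 / fExp m (A.mulVec lam) ^ 2 := by
  have hpos := fExp_pos' hm (A.mulVec lam)
  have hL := Lip_pos A hA
  have hN : normLinv A (gradF m A lam) =
      normLinv A (A.transpose.mulVec (gradf m (A.mulVec lam))) / fExp m (A.mulVec lam) := by
    unfold normLinv
    rw [← Real.sqrt_sq hpos.le, ← Real.sqrt_div' _ (by positivity),
      Finset.sum_div]
    congr 1
    refine Finset.sum_congr rfl fun i _ => ?_
    rw [gradF_eq hm, div_pow, div_right_comm]
  have h1 : normLinv A (gradF m A lam) ≥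
      gammaT A K * D1 (K ∩ kerAT A) (gradf m (A.mulVec lam)) / fExp m (A.mulVec lam) := by
    rw [hN]
    exact div_le_div_of_nonneg_right (gammaT_mul_le A K _ hK hker) hpos.le
  refine ⟨h1, fun β hβ hE δ hδ => ?_⟩
  have hn' : (0 : ℝ) < n := by exact_mod_cast hn
  have hsq : normLinv A (gradF m A lam) ^ 2 = ∑ i, gradF m A lam i ^ 2 / Lip A i :=
    Real.sq_sqrt (Finset.sum_nonneg fun i _ => div_nonneg (sq_nonneg _) (hL i).le)
  have h0 : 0 ≤ gammaT A K * D1 (K ∩ kerAT A) (gradf m (A.mulVec lam)) / fExp m (A.mulVec lam) :=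
    div_nonneg (mul_nonneg (gammaT_nonneg A K) (D1_nonneg _ _)) hpos.le
  have h2 := pow_le_pow_left₀ h0 h1 2
  have h3 : (∑ i, gradF m A lam i * δ i) + (β / 2) * ∑ i, Lip A i * δ i ^ 2 =
      -(1 / (2 * β)) * normLinv A (gradF m A lam) ^ 2 := by
    rw [hsq, Finset.mul_sum, Finset.mul_sum, ← Finset.sum_add_distrib]
    refine Finset.sum_congr rfl fun i _ => ?_
    rw [hδ i]
    have := (hL i).ne'
    field_simp
    ring
  have h4 := hE lam δ
  rw [h3] at h4
  have hc : 0 ≤ (τ : ℝ) / (2 * β * n) := by positivity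
  have h5 := mul_le_mul_of_nonneg_left h2 hc
  have e1 : (τ : ℝ) / n * (-(1 / (2 * β)) * normLinv A (gradF m A lam) ^ 2) =
      -((τ : ℝ) / (2 * β * n) * normLinv A (gradF m A lam) ^ 2) := by
    field_simp
  have e2 : (τ : ℝ) / (2 * β * (n : ℝ)) * gammaT A K ^ 2 *
            D1 (K ∩ kerAT A) (gradf m (A.mulVec lam)) ^ 2 / fExp m (A.mulVec lam) ^ 2 =
      (τ : ℝ) / (2 * β * n) * (gammaT A K * D1 (K ∩ kerAT A) (gradf m (A.mulVec lam)) /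
        fExp m (A.mulVec lam)) ^ 2 := by
    rw [div_pow, mul_pow]
    ring
  rw [e1] at h4
  rw [e2]
  linarith

end
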